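/- Let • denote the rooted tree consisting of a single vertex and let 𝒯_* be any fixed rooted tree. For each n ∈ ℕ let 𝒯_{n,1}, …, 𝒯_{n,k_n} be a finite list of rooted trees, and for a rooted tree 𝒯 let M_n(𝒯) denote the rooted tree whose root has as children the roots of one copy each of 𝒯, 𝒯_{n,1}, …, 𝒯_{n,k_n}. Write M_{n,…,1}(·) = M_n ∘ ⋯ ∘ M_1(·). If there is a constant c < 1 such that sup_{x ∈ [0,1]} | x·∏_{j=1}^{k_n} (1 − p[𝒯_{n,j}](x)) | ≤ c for all n ∈ ℕ, then sup_{x ∈ [0,1]} | p[M_{n,…,1}(𝒯_*)](x) − p[M_{n,…,1}(•)](x) | → 0 as n → ∞. -/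

import Mathlib

/-- A rooted tree: a finite tree with a distinguished root vertex, given by the (ordered)
list of subtrees rooted at the children of the root. -/
inductive RTree : Type where
  | node : List RTree → RTree

namespace RTree

mutual
/-- The tree polynomial `p[𝒯] ∈ ℤ[x]`: `p = x` for a single vertex, and
`p[𝒯] = x (1 − ∏ᵢ (1 − p[𝒯ᵢ]))` when the subtrees rooted at the children of the root are
`𝒯₁, …, 𝒯ᵣ`. -/
noncomputable def treePoly : RTree → Polynomial ℤ
  | .node [] => Polynomial.X
  | .node (t :: ts) => Polynomial.X * (1 - prodPoly (t :: ts))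
  termination_by t => sizeOf t

/-- `∏ᵢ (1 − p[𝒯ᵢ])` over a list of trees. -/
noncomputable def prodPoly : List RTree → Polynomial ℤ
  | [] => 1
  | t :: ts => (1 - treePoly t) * prodPoly ts
  termination_by l => sizeOf l
end

mutual
/-- The set of vertex addresses of a rooted tree: a vertex is addressed by the list of
child indices on the path from the root to it (so the root has address `[]`). -/
def vertexFinset : RTree → Finset (List ℕ)
  | .node ts => insert [] (childVerts ts 0)
  termination_by t => sizeOf t

def childVerts : List RTree → ℕ → Finset (List ℕ)
  | [], _ => ∅
  | t :: ts, i => (vertexFinset t).image (List.cons i) ∪ childVerts ts (i + 1)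
  termination_by l _ => sizeOf l
end

mutual
/-- The subtree rooted at a given vertex address, if the address is valid. -/
def subtreeAt : RTree → List ℕ → Option RTree
  | t, [] => some t
  | .node ts, i :: l => subtreeAtAux ts i l
  termination_by t _ => sizeOf t

def subtreeAtAux : List RTree → ℕ → List ℕ → Option RTree
  | [], _, _ => none
  | t :: _, 0, l => subtreeAt t l
  | _ :: ts, i + 1, l => subtreeAtAux ts i l
  termination_by l _ _ => sizeOf l
end

/-- Whether a tree consists of a single vertex (i.e. its root is a leaf). -/
def isLeafTree : RTree → Bool
  | .node [] => true
  | .node (_ :: _) => false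

/-- The set of (addresses of) leaves of a rooted tree: vertices with no children. -/
def leafFinset (t : RTree) : Finset (List ℕ) :=
  (vertexFinset t).filter (fun l => (subtreeAt t l).any isLeafTree = true)

/-- The set of all prefixes of an address: the set of vertices of the path from the root
to the vertex with this address. -/
def prefixFinset (l : List ℕ) : Finset (List ℕ) :=
  (Finset.range (l.length + 1)).image (fun k => l.take k)

end RTree

namespace RTree

/-- `iterM F n 𝒯 = M_n(⋯(M_1(𝒯))⋯)`, where `M_n(𝒯)` is the rooted tree whose root has as
children the roots of one copy each of `𝒯` and of the trees `𝒯_{n,1}, …, 𝒯_{n,k_n}` in the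
list `F n`. -/
def iterM (F : ℕ → List RTree) : ℕ → RTree → RTree
  | 0, t => t
  | n + 1, t => .node (iterM F n t :: F (n + 1))

end RTree

/- The trees `M_n(𝒮)` and `M_n(𝒯)` differ in a single root branch, and `p[M_n(𝒯)]` is affine in
`p[𝒯]` with slope `x ∏ⱼ (1 − p[𝒯_{n,j}])`. So each application of an `M_n` multiplies the
difference of the two polynomials by this slope, which is uniformly at most `c < 1` in size, and
the difference decays geometrically. -/

open Filter Polynomial

theorem tendstoUniformlyOn_zero_of_norm_succ_le {α E : Type*} [SeminormedAddGroup E]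
    {f : ℕ → α → E} {K : Set α} {B c : ℝ} (hc : c < 1) (hzero : ∀ x ∈ K, ‖f 0 x‖ ≤ B)
    (hsucc : ∀ n, ∀ x ∈ K, ‖f (n + 1) x‖ ≤ c * ‖f n x‖) :
    TendstoUniformlyOn f 0 atTop K := by
  have hgeom : ∀ n, ∀ x ∈ K, ‖f n x‖ ≤ max c 0 ^ n * B := fun n x hx =>
    calc ‖f n x‖ ≤ max c 0 ^ n * ‖f 0 x‖ :=
          le_geom (u := fun k => ‖f k x‖) (le_max_right c 0) n fun k _ =>
            (hsucc k x hx).trans (by gcongr; exact le_max_left c 0)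
      _ ≤ max c 0 ^ n * B := by gcongr; exact hzero x hx
  have hlim : Tendsto (fun n : ℕ => max c 0 ^ n * B) atTop (nhds 0) := by
    simpa only [zero_mul] using (tendsto_pow_atTop_nhds_zero_of_lt_one (le_max_right c 0)
      (max_lt hc one_pos)).mul_const B
  rw [SeminormedAddGroup.tendstoUniformlyOn_zero]
  intro ε hε
  filter_upwards [hlim.eventually_lt_const hε] with n hn x hx
  exact (hgeom n x hx).trans_lt hn

namespace RTree

theorem prodPoly_eq_prod_map (l : List RTree) :
    prodPoly l = (l.map fun t => 1 - treePoly t).prod := by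
  induction l with
  | nil => simp only [prodPoly, List.map_nil, List.prod_nil]
  | cons t ts ih => simp only [prodPoly, ih, List.map_cons, List.prod_cons]

theorem aeval_prodPoly {A : Type*} [Ring A] (x : A) (l : List RTree) :
    aeval x (prodPoly l) = (l.map fun t => 1 - aeval x (treePoly t)).prod := by
  simp only [prodPoly_eq_prod_map, map_list_prod, List.map_map, Function.comp_def, map_sub,
    map_one]

theorem treePoly_node_cons_sub (s t : RTree) (l : List RTree) :
    treePoly (node (s :: l)) - treePoly (node (t :: l)) =
      X * prodPoly l * (treePoly s - treePoly t) := by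
  simp only [treePoly, prodPoly]
  ring

theorem aeval_treePoly_iterM_succ_sub {A : Type*} [Ring A] (F : ℕ → List RTree) (n : ℕ)
    (s t : RTree) (x : A) :
    aeval x (treePoly (iterM F (n + 1) s)) - aeval x (treePoly (iterM F (n + 1) t)) =
      (x * ((F (n + 1)).map fun u => 1 - aeval x (treePoly u)).prod) *
        (aeval x (treePoly (iterM F n s)) - aeval x (treePoly (iterM F n t))) := by
  simp only [iterM, ← map_sub, treePoly_node_cons_sub, map_mul, aeval_X, aeval_prodPoly]

end RTree

theorem stmt10_general {A : Type*} [SeminormedRing A] {K : Set A} (hK : IsCompact K)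
    (s t : RTree) (F : ℕ → List RTree) (c : ℝ) (hc : c < 1)
    (hbound : ∀ n : ℕ, 1 ≤ n → ∀ x ∈ K,
      ‖x * ((F n).map (fun u => 1 - aeval x (RTree.treePoly u))).prod‖ ≤ c) :
    TendstoUniformlyOn
      (fun n x => aeval x (RTree.treePoly (RTree.iterM F n s))
        - aeval x (RTree.treePoly (RTree.iterM F n t)))
      (fun _ => 0) atTop K := by
  obtain ⟨B, hB⟩ := hK.exists_bound_of_continuousOn
    ((RTree.treePoly s).continuous_aeval.sub (RTree.treePoly t).continuous_aeval).continuousOn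
  refine tendstoUniformlyOn_zero_of_norm_succ_le hc hB fun n x hx => ?_
  rw [RTree.aeval_treePoly_iterM_succ_sub]
  exact norm_mul_le_of_le (hbound (n + 1) n.succ_pos x hx) le_rfl

/-- Let `•` be the single-vertex tree and `𝒯_*` a fixed rooted tree; for
each `n ≥ 1` let `𝒯_{n,1}, …, 𝒯_{n,k_n}` be rooted trees (the list `F n`). If there is a
constant `c < 1` with `sup_{x ∈ [0,1]} |x ∏_{j=1}^{k_n} (1 − p[𝒯_{n,j}](x))| ≤ c` for all
`n`, then `sup_{x ∈ [0,1]} |p[M_{n,…,1}(𝒯_*)](x) − p[M_{n,…,1}(•)](x)| → 0` as `n → ∞`. -/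
theorem stmt10 (Tstar : RTree) (F : ℕ → List RTree) (c : ℝ) (hc : c < 1)
    (hbound : ∀ n : ℕ, 1 ≤ n → ∀ x ∈ Set.Icc (0 : ℝ) 1,
      |x * ((F n).map (fun s => 1 - Polynomial.aeval x (RTree.treePoly s))).prod| ≤ c) :
    TendstoUniformlyOn
      (fun n x => Polynomial.aeval x (RTree.treePoly (RTree.iterM F n Tstar))
        - Polynomial.aeval x (RTree.treePoly (RTree.iterM F n (RTree.node []))))
      (fun _ => 0) Filter.atTop (Set.Icc (0 : ℝ) 1) :=
  stmt10_general isCompact_Icc Tstar (RTree.node []) F c hc hbound
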